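/- For every real number t, the series Σ_{m=0}^{∞} ((m−1)(m−2)/2) · t^{2m}/(2m)! converges and equals (e^{−t}·(8 + 5t + t²) + e^{t}·(8 − 5t + t²)) / 16. -/

import Mathlib

open scoped Nat

/-!
With `n = 2m`, the coefficient is `(m-1)(m-2)/2 = 1 - (5/8) n + (1/8) n(n-1)`. Summing
`t^n/n!` over even `n` against `1`, `n` and `n(n-1)` gives `cosh t`, `t sinh t` and `t² cosh t`:
the factors `n` and `n(n-1)` cancel against the factorial and shift the index by one and two.
Hence the sum is `cosh t - (5/8) t sinh t + (1/8) t² cosh t`, which is the claimed value.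
-/

lemma hasSum_even_mul (t : ℝ) :
    HasSum (fun m : ℕ => (2 * m : ℝ) * (t ^ (2 * m) / ((2 * m)! : ℝ))) (t * Real.sinh t) := by
  refine (hasSum_nat_add_iff' 1).mp ?_
  convert (Real.hasSum_sinh t).mul_left t using 1
  · rfl
  · ext m
    have h : ((2 * (m + 1))! : ℝ) = (2 * m + 2) * ((2 * m + 1)! : ℝ) := by
      rw [show 2 * (m + 1) = (2 * m + 1) + 1 by ring, Nat.factorial_succ]
      push_cast
      ring
    rw [h]
    have : (2 * m + 2 : ℝ) ≠ 0 := by positivity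
    push_cast
    field_simp
    ring
  · simp

lemma hasSum_even_mul_pred (t : ℝ) :
    HasSum (fun m : ℕ => (2 * m : ℝ) * (2 * m - 1) * (t ^ (2 * m) / ((2 * m)! : ℝ)))
      (t ^ 2 * Real.cosh t) := by
  refine (hasSum_nat_add_iff' 1).mp ?_
  convert (Real.hasSum_cosh t).mul_left (t ^ 2) using 1
  · rfl
  · ext m
    have h : ((2 * (m + 1))! : ℝ) = (2 * m + 2) * (2 * m + 1) * ((2 * m)! : ℝ) := by
      rw [show 2 * (m + 1) = (2 * m + 1) + 1 by ring, Nat.factorial_succ, Nat.factorial_succ]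
      push_cast
      ring
    rw [h]
    have : (2 * m + 2 : ℝ) ≠ 0 := by positivity
    have : (2 * m + 1 : ℝ) ≠ 0 := by positivity
    push_cast
    field_simp
    ring
  · simp

/-- The series `∑_{m≥0} ((m−1)(m−2)/2) t^{2m}/(2m)!` converges to
`(e^{−t}(8 + 5t + t²) + e^{t}(8 − 5t + t²))/16`. -/
theorem stmt14 (t : ℝ) :
    HasSum
      (fun m : ℕ => ((m : ℝ) - 1) * ((m : ℝ) - 2) / 2 * t ^ (2 * m) / ((2 * m)! : ℝ))
      ((Real.exp (-t) * (8 + 5 * t + t ^ 2) + Real.exp t * (8 - 5 * t + t ^ 2)) / 16) := by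
  convert ((Real.hasSum_cosh t).add ((hasSum_even_mul t).mul_left (-5 / 8))).add
    ((hasSum_even_mul_pred t).mul_left (1 / 8)) using 1
  · ext m
    ring
  · rw [Real.cosh_eq, Real.sinh_eq]
    ring
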